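/- arXiv:1309.4994 — 7 statements merged into one kernel-verified Lean document; each statement's English description precedes it below -/
import Mathlib

section
/- Let O = (b,d,u) be a Subjective Logic opinion with u < 1, and let P = (x_O, y_O) = ((2d+u)/√3, u). Then the Euclidean angle ∠PUD at the vertex U = (1/√3,1), where D = (2/√3,0), equals arcsin(b/√((1/3)·(1+d−u)² + b²)). -/
theorem sqrt_eq_aux {x y : ℝ} (hy : 0 ≤ y) (h : x = y ^ 2) : Real.sqrt x = y := by
  rw [h, Real.sqrt_sq hy]

/-- For an opinion (b,d,u) with u < 1 and P = ((2d+u)/√3, u), the angle ∠PUD at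
U = (1/√3,1), where D = (2/√3,0), equals arcsin(b/√((1/3)·(1+d−u)² + b²)). -/
theorem stmt6 (b d u : ℝ) (hb : 0 ≤ b) (hd : 0 ≤ d) (hu : 0 ≤ u) (hsum : b + d + u = 1)
    (hu1 : u < 1) (P U D : EuclideanSpace ℝ (Fin 2))
    (hP : P = ![(2 * d + u) / Real.sqrt 3, u])
    (hU : U = ![1 / Real.sqrt 3, 1]) (hD : D = ![2 / Real.sqrt 3, 0]) :
    EuclideanGeometry.angle P U D
      = Real.arcsin (b / Real.sqrt ((1/3) * (1 + d - u)^2 + b^2)) := by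
  have h3 : (0:ℝ) < Real.sqrt 3 := by positivity
  have h33 : Real.sqrt 3 ^ 2 = 3 := Real.sq_sqrt (by norm_num)
  have hP0 : P 0 = (2 * d + u) / Real.sqrt 3 := by rw [hP]; rfl
  have hP1 : P 1 = u := by rw [hP]; rfl
  have hU0 : U 0 = 1 / Real.sqrt 3 := by rw [hU]; rfl
  have hU1 : U 1 = 1 := by rw [hU]; rfl
  have hD0 : D 0 = 2 / Real.sqrt 3 := by rw [hD]; rfl
  have hD1 : D 1 = 0 := by rw [hD]; rfl
  have hv : 0 < 1 + d - u := by linarith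
  have hR : 0 < (1/3) * (1 + d - u)^2 + b^2 := by positivity
  have hbe : b = 1 - d - u := by linarith
  have hi : inner ℝ (P - U) (D - U) = (2 / 3) * (1 + d - u) := by
    simp only [PiLp.inner_apply, Fin.sum_univ_two, PiLp.sub_apply, hP0, hP1, hU0, hU1, hD0, hD1,
      RCLike.inner_apply, conj_trivial]
    field_simp
    rw [h33]
    ring
  have hn1 : ‖P - U‖ = Real.sqrt ((1/3) * (1 + d - u)^2 + b^2) := by
    rw [EuclideanSpace.norm_eq]
    congr 1
    simp only [Fin.sum_univ_two, PiLp.sub_apply, hP0, hP1, hU0, hU1, Real.norm_eq_abs, sq_abs]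
    rw [hbe]
    field_simp
    rw [h33]
    ring
  have hn2 : ‖D - U‖ = 2 / Real.sqrt 3 := by
    rw [EuclideanSpace.norm_eq]
    refine sqrt_eq_aux (by positivity) ?_
    simp only [Fin.sum_univ_two, PiLp.sub_apply, hD0, hD1, hU0, hU1, Real.norm_eq_abs, sq_abs]
    field_simp
    rw [h33]
    ring
  rw [EuclideanGeometry.angle, InnerProductGeometry.angle, vsub_eq_sub, vsub_eq_sub, hi, hn1, hn2,
    Real.arcsin_eq_arccos (by positivity)]
  congr 1
  symm
  set R := (1/3) * (1 + d - u)^2 + b^2 with hRdef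
  have hr : 0 < Real.sqrt R := Real.sqrt_pos.2 hR
  have hrr : Real.sqrt R ^ 2 = R := Real.sq_sqrt hR.le
  refine sqrt_eq_aux (by positivity) ?_
  simp only [div_pow, mul_pow, h33, hrr]
  field_simp
  rw [hRdef]
  ring
end

section
/- For every Subjective Logic opinion O = (b,d,u), the ratio r_O = √(x_O²+y_O²)/√(x_{M_O}²+y_{M_O}²) of the distance from B to O over the distance from B to M_O satisfies 0 ≤ r_O ≤ 1. -/
/-- The direction α_O of an opinion. -/
noncomputable def alphaO (b d u : ℝ) : ℝ :=
  if b = 1 then 0 else Real.arctan (Real.sqrt 3 * u / (2 * d + u))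

/-- Cartesian x-coordinate of an opinion. -/
noncomputable def xO (d u : ℝ) : ℝ := (2 * d + u) / Real.sqrt 3

/-- Cartesian y-coordinate of an opinion. -/
noncomputable def yO (u : ℝ) : ℝ := u

/-- x-coordinate of the point M_O. -/
noncomputable def xM (b d u : ℝ) : ℝ :=
  (2 - yO u + Real.tan (alphaO b d u) * xO d u) / (Real.tan (alphaO b d u) + Real.sqrt 3)

/-- y-coordinate of the point M_O. -/
noncomputable def yM (b d u : ℝ) : ℝ := -Real.sqrt 3 * xM b d u + 2

/-- The ratio r_O = |BO| / |BM_O|. -/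
noncomputable def rO (b d u : ℝ) : ℝ :=
  Real.sqrt (xO d u ^ 2 + yO u ^ 2) / Real.sqrt (xM b d u ^ 2 + yM b d u ^ 2)

/-- For every Subjective Logic opinion (b,d,u), the ratio r_O = |BO|/|BM_O|
satisfies 0 ≤ r_O ≤ 1. -/
theorem stmt8 (b d u : ℝ) (hb : 0 ≤ b) (hd : 0 ≤ d) (hu : 0 ≤ u) (hsum : b + d + u = 1) :
    0 ≤ rO b d u ∧ rO b d u ≤ 1 := by
  refine ⟨by unfold rO; positivity, ?_⟩
  by_cases h1 : b = 1
  · have hd0 : d = 0 := by linarith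
    have hu0 : u = 0 := by linarith
    subst hd0 hu0
    simp [rO, xO, yO]
  have hs : 0 < d + u := by
    rcases lt_or_eq_of_le (add_nonneg hd hu) with h | h
    · exact h
    · exact absurd (by linarith) h1
  have hs1 : d + u ≤ 1 := by linarith
  have h2 : 0 < 2 * d + u := by
    rcases lt_or_eq_of_le hd with h | h
    · linarith
    · linarith
  have h3 : 0 < Real.sqrt 3 := by positivity
  have h33 : Real.sqrt 3 ^ 2 = 3 := Real.sq_sqrt (by norm_num)
  have hx : xM b d u = xO d u / (d + u) := by
    have hden : Real.sqrt 3 * u / (2 * d + u) + Real.sqrt 3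
        = 2 * Real.sqrt 3 * (d + u) / (2 * d + u) := by
      field_simp
      ring
    have hnum : 2 - u + Real.sqrt 3 * u / (2 * d + u) * ((2 * d + u) / Real.sqrt 3) = 2 := by
      field_simp
      ring
    simp only [xM, xO, yO, alphaO, if_neg h1, Real.tan_arctan]
    rw [hden, hnum]
    field_simp
  have hy : yM b d u = yO u / (d + u) := by
    rw [yM, hx]
    simp only [xO, yO]
    field_simp
    ring
  have key : Real.sqrt (xO d u ^ 2 + yO u ^ 2)
      ≤ Real.sqrt (xM b d u ^ 2 + yM b d u ^ 2) := by
    apply Real.sqrt_le_sqrt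
    rw [hx, hy, div_pow, div_pow, ← add_div, le_div_iff₀ (by positivity)]
    have : (d + u) ^ 2 ≤ 1 := by nlinarith
    exact mul_le_of_le_one_right (by positivity) this
  exact div_le_one_of_le₀ key (Real.sqrt_nonneg _)
end

section
/- For all Subjective Logic opinions T = (b_T,d_T,u_T) and C = (b_C,d_C,u_C), the projected direction α' = (3/π)·α_C·ε_T − β_T satisfies −π/3 ≤ α' ≤ 2π/3. -/
/-- The angle β_O of an opinion. -/
noncomputable def betaO (b d u : ℝ) : ℝ :=
  if d = 1 then Real.pi / 3 else Real.arctan (Real.sqrt 3 * u / (2 - 2 * d - u))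

/-- The angle γ_O = π/3 − β_O. -/
noncomputable def gammaO (b d u : ℝ) : ℝ := Real.pi / 3 - betaO b d u

/-- The length |OU|. -/
noncomputable def distOU (b d u : ℝ) : ℝ := Real.sqrt ((1/3) * (1 + d - u)^2 + b^2)

/-- The angle δ_O. -/
noncomputable def deltaO (b d u : ℝ) : ℝ :=
  if u = 1 then 0 else Real.arcsin (b / distOU b d u)

/-- The angle ε_O = π − γ_O − δ_O. -/
noncomputable def epsO (b d u : ℝ) : ℝ := Real.pi - gammaO b d u - deltaO b d u

/-- The projected direction α' = (3/π)·α_C·ε_T − β_T. -/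
noncomputable def alphaProj (bT dT uT bC dC uC : ℝ) : ℝ :=
  (3 / Real.pi) * alphaO bC dC uC * epsO bT dT uT - betaO bT dT uT

lemma arctan_aux (x u : ℝ) (hx : 0 ≤ x) (hu : 0 ≤ u) :
    0 ≤ Real.arctan (Real.sqrt 3 * u / (2 * x + u)) ∧
    Real.arctan (Real.sqrt 3 * u / (2 * x + u)) ≤ Real.pi / 3 := by
  constructor
  · rw [Real.arctan_nonneg]
    positivity
  · rw [← Real.arctan_sqrt_three]
    apply Real.arctan_mono
    apply div_le_of_le_mul₀ (by positivity) (by positivity)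
    exact mul_le_mul_of_nonneg_left (by linarith) (by positivity)

/-- For all Subjective Logic opinions T and C, the projected direction
α' = (3/π)·α_C·ε_T − β_T satisfies −π/3 ≤ α' ≤ 2π/3. -/
theorem stmt10 (bT dT uT bC dC uC : ℝ)
    (hbT : 0 ≤ bT) (hdT : 0 ≤ dT) (huT : 0 ≤ uT) (hsumT : bT + dT + uT = 1)
    (hbC : 0 ≤ bC) (hdC : 0 ≤ dC) (huC : 0 ≤ uC) (hsumC : bC + dC + uC = 1) :
    -(Real.pi / 3) ≤ alphaProj bT dT uT bC dC uC ∧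
    alphaProj bT dT uT bC dC uC ≤ 2 * Real.pi / 3 := by
  have hpi := Real.pi_pos
  have hα : 0 ≤ alphaO bC dC uC ∧ alphaO bC dC uC ≤ Real.pi / 3 := by
    unfold alphaO
    split_ifs
    · exact ⟨le_rfl, by positivity⟩
    · exact arctan_aux dC uC hdC huC
  have hβ : 0 ≤ betaO bT dT uT ∧ betaO bT dT uT ≤ Real.pi / 3 := by
    unfold betaO
    split_ifs
    · exact ⟨by positivity, le_rfl⟩
    · have h : 2 - 2 * dT - uT = 2 * bT + uT := by linarith
      rw [h]
      exact arctan_aux bT uT hbT huT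
  have hδ : 0 ≤ deltaO bT dT uT ∧ deltaO bT dT uT ≤ Real.pi / 2 := by
    unfold deltaO
    split_ifs
    · exact ⟨le_rfl, by positivity⟩
    · exact ⟨Real.arcsin_nonneg.2 (div_nonneg hbT (Real.sqrt_nonneg _)),
        Real.arcsin_le_pi_div_two _⟩
  have hε : epsO bT dT uT = 2 * Real.pi / 3 + betaO bT dT uT - deltaO bT dT uT := by
    unfold epsO gammaO
    ring
  have hε0 : 0 ≤ epsO bT dT uT := by rw [hε]; linarith [hδ.2, hβ.1]
  have hk0 : 0 ≤ (3 / Real.pi) * alphaO bC dC uC := mul_nonneg (by positivity) hα.1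
  have hk1 : (3 / Real.pi) * alphaO bC dC uC ≤ 1 := by
    rw [div_mul_eq_mul_div, div_le_one hpi]
    linarith [hα.2]
  unfold alphaProj
  constructor
  · linarith [mul_nonneg hk0 hε0, hβ.2]
  · linarith [mul_le_of_le_one_left hε0 hk1, hδ.1]
end

section
/- For all Subjective Logic opinions T = (b_T,d_T,u_T) and C = (b_C,d_C,u_C), the combination W = T⊛C = (b_W,d_W,u_W) is itself a Subjective Logic opinion: b_W ≥ 0, d_W ≥ 0, u_W ≥ 0 and b_W + d_W + u_W = 1. -/
/-- A Subjective Logic opinion: belief, disbelief, uncertainty. -/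
def IsOpinion (b d u : ℝ) : Prop := 0 ≤ b ∧ 0 ≤ d ∧ 0 ≤ u ∧ b + d + u = 1

/-- The maximal length |TM_{C'}|. -/
noncomputable def Lmax (bT dT uT bC dC uC : ℝ) : ℝ :=
  if alphaProj bT dT uT bC dC uC = Real.pi / 2 then 2 * bT
  else if alphaProj bT dT uT bC dC uC = -(Real.pi / 3) then (2 / Real.sqrt 3) * uT
  else if alphaProj bT dT uT bC dC uC = 2 * Real.pi / 3 then (2 / Real.sqrt 3) * (1 - uT)
  else (2 * Real.sqrt (Real.tan (alphaProj bT dT uT bC dC uC) ^ 2 + 1)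
        / |Real.tan (alphaProj bT dT uT bC dC uC) + Real.sqrt 3|) * bT

/-- The length ℓ = |TC'| = r_C·|TM_{C'}|. -/
noncomputable def lenTC (bT dT uT bC dC uC : ℝ) : ℝ :=
  rO bC dC uC * Lmax bT dT uT bC dC uC

/-- Uncertainty of the combination W = T⊛C. -/
noncomputable def uW (bT dT uT bC dC uC : ℝ) : ℝ :=
  uT + Real.sin (alphaProj bT dT uT bC dC uC) * lenTC bT dT uT bC dC uC

/-- Disbelief of the combination W = T⊛C. -/
noncomputable def dW (bT dT uT bC dC uC : ℝ) : ℝ :=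
  dT + (uT - uW bT dT uT bC dC uC) * Real.cos (Real.pi / 3)
    + Real.cos (alphaProj bT dT uT bC dC uC) * Real.sin (Real.pi / 3)
      * lenTC bT dT uT bC dC uC

/-- Belief of the combination W = T⊛C. -/
noncomputable def bW (bT dT uT bC dC uC : ℝ) : ℝ :=
  1 - dW bT dT uT bC dC uC - uW bT dT uT bC dC uC

open Real in
lemma aux_beta (b d u : ℝ) (h : IsOpinion b d u) :
    0 ≤ betaO b d u ∧ betaO b d u ≤ π / 3 ∧
    ∃ R : ℝ, 0 ≤ R ∧ u + 2 * b = R * cos (betaO b d u) ∧ √3 * u = R * sin (betaO b d u) := by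
  obtain ⟨hb, hd, hu, hs⟩ := h
  have hpi := pi_pos
  unfold betaO
  split_ifs with h1
  · refine ⟨by positivity, le_rfl, 0, le_rfl, ?_, ?_⟩
    · have : b = 0 := by linarith
      have : u = 0 := by linarith
      simp [*]
    · have : u = 0 := by linarith
      simp [*]
  · have hd1 : d < 1 := lt_of_le_of_ne (by linarith) h1
    have hpos : 0 < 2 - 2 * d - u := by linarith
    have hc := cos_arctan_pos (√3 * u / (2 - 2 * d - u))
    refine ⟨?_, ?_, (2 - 2 * d - u) / cos (arctan (√3 * u / (2 - 2 * d - u))), by positivity, ?_, ?_⟩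
    · exact arctan_nonneg.2 (by positivity)
    · rw [← arctan_sqrt_three]
      apply arctan_strictMono.monotone
      rw [div_le_iff₀ hpos]
      have : (0:ℝ) ≤ √3 := by positivity
      nlinarith
    · field_simp
      linarith
    · have ht := tan_arctan (√3 * u / (2 - 2 * d - u))
      rw [tan_eq_sin_div_cos, div_eq_div_iff hc.ne' hpos.ne'] at ht
      rw [div_mul_eq_mul_div, eq_div_iff hc.ne']
      linarith

open Real in
lemma aux_alpha (b d u : ℝ) (h : IsOpinion b d u) :
    0 ≤ alphaO b d u ∧ alphaO b d u ≤ π / 3 := by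
  obtain ⟨hb, hd, hu, hs⟩ := h
  have hpi := pi_pos
  unfold alphaO
  split_ifs with h1
  · exact ⟨le_rfl, by positivity⟩
  · have hb1 : b < 1 := lt_of_le_of_ne (by linarith) h1
    have hpos : 0 < 2 * d + u := by linarith
    refine ⟨arctan_nonneg.2 (by positivity), ?_⟩
    rw [← arctan_sqrt_three]
    apply arctan_strictMono.monotone
    rw [div_le_iff₀ hpos]
    have : (0:ℝ) ≤ √3 := by positivity
    nlinarith

open Real in
lemma aux_delta (b d u : ℝ) (h : IsOpinion b d u) :
    0 ≤ deltaO b d u ∧ deltaO b d u ≤ π / 2 ∧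
    ∃ R : ℝ, 0 ≤ R ∧ b = R * sin (deltaO b d u) ∧ 2 * d + b = √3 * (R * cos (deltaO b d u)) := by
  obtain ⟨hb, hd, hu, hs⟩ := h
  have hpi := pi_pos
  unfold deltaO
  split_ifs with h1
  · refine ⟨le_rfl, by positivity, 0, le_rfl, ?_, ?_⟩
    · simp; linarith
    · simp; linarith
  · have hu1 : u < 1 := lt_of_le_of_ne (by linarith) h1
    have hq : 0 < (1/3) * (1 + d - u)^2 + b^2 := by
      have : 0 < 1 + d - u := by linarith
      positivity
    have hR : 0 < distOU b d u := sqrt_pos.2 hq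
    have hR2 : distOU b d u ^ 2 = (1/3) * (1 + d - u)^2 + b^2 := sq_sqrt hq.le
    have hle : b / distOU b d u ≤ 1 := by
      rw [div_le_one hR]
      apply abs_le_of_sq_le_sq' _ hR.le |>.2
      rw [hR2]; nlinarith [sq_nonneg (1 + d - u)]
    have h0 : 0 ≤ b / distOU b d u := by positivity
    refine ⟨arcsin_nonneg.2 h0, arcsin_le_pi_div_two _, distOU b d u, hR.le, ?_, ?_⟩
    · rw [sin_arcsin (by linarith) hle]; field_simp
    · have hc : 0 ≤ cos (arcsin (b / distOU b d u)) := cos_arcsin_nonneg _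
      have hsn : sin (arcsin (b / distOU b d u)) = b / distOU b d u :=
        sin_arcsin (by linarith) hle
      have hcs := sin_sq_add_cos_sq (arcsin (b / distOU b d u))
      have hb' : distOU b d u * (b / distOU b d u) = b := by field_simp
      have h3 : √3 ^ 2 = 3 := sq_sqrt (by norm_num)
      rw [hsn] at hcs
      rw [← sq_eq_sq₀ (by linarith) (by positivity), mul_pow, mul_pow, h3]
      have : cos (arcsin (b / distOU b d u)) ^ 2 = 1 - (b / distOU b d u)^2 := by linarith
      rw [this, mul_sub, ← mul_pow, hb', hR2]
      have : u = 1 - b - d := by linarith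
      subst this; ring

open Real in
lemma aux_r (b d u : ℝ) (h : IsOpinion b d u) : 0 ≤ rO b d u ∧ rO b d u ≤ 1 := by
  obtain ⟨hb, hd, hu, hs⟩ := h
  unfold rO
  refine ⟨by positivity, div_le_one_of_le₀ (sqrt_le_sqrt ?_) (sqrt_nonneg _)⟩
  by_cases h1 : b = 1
  · have : d = 0 := by linarith
    have : u = 0 := by linarith
    subst d u
    simp only [xO, yO]
    norm_num
    positivity
  · have hb1 : b < 1 := lt_of_le_of_ne (by linarith) h1
    have hpos : 0 < 2 * d + u := by linarith
    have h30 : 0 < √3 := by positivity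
    have h3 : √3 ^ 2 = 3 := sq_sqrt (by norm_num)
    have ht : tan (alphaO b d u) = √3 * u / (2 * d + u) := by
      simp only [alphaO, if_neg h1, tan_arctan]
    have hx : xO d u = (d + u) * xM b d u := by
      have h4 : 0 < √3 * u / (2 * d + u) + √3 := by positivity
      unfold xM
      rw [ht, mul_div_assoc', eq_div_iff h4.ne']
      simp only [xO, yO]
      field_simp
      ring_nf
    have hy : yO u = (d + u) * yM b d u := by
      unfold yM
      have : (d + u) * (-√3 * xM b d u + 2) = -√3 * ((d + u) * xM b d u) + 2 * (d+u) := by ring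
      rw [this, ← hx]
      simp only [xO, yO]
      field_simp
      ring
    rw [hx, hy]
    have : (d+u)^2 ≤ 1 := by nlinarith
    nlinarith [sq_nonneg (xM b d u), sq_nonneg (yM b d u)]

open Real in
/-- For all Subjective Logic opinions T and C, the combination W = T⊛C is itself a
Subjective Logic opinion. -/
theorem stmt13 (bT dT uT bC dC uC : ℝ)
    (hT : IsOpinion bT dT uT) (hC : IsOpinion bC dC uC) :
    IsOpinion (bW bT dT uT bC dC uC) (dW bT dT uT bC dC uC) (uW bT dT uT bC dC uC) := by
  obtain ⟨hβ0, hβ1, R, hR, hRc, hRs⟩ := aux_beta _ _ _ hT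
  obtain ⟨hδ0, hδ1, S, hS, hSs, hSc⟩ := aux_delta _ _ _ hT
  obtain ⟨hα0, hα1⟩ := aux_alpha _ _ _ hC
  obtain ⟨hr0, hr1⟩ := aux_r _ _ _ hC
  obtain ⟨hb, hd, hu, hs⟩ := hT
  have hpi := pi_pos
  have h30 : 0 < √3 := by positivity
  have h3 : √3 * √3 = 3 := mul_self_sqrt (by norm_num)
  have hε : epsO bT dT uT = 2 * π / 3 + betaO bT dT uT - deltaO bT dT uT := by
    unfold epsO gammaO; ring
  have hA : alphaProj bT dT uT bC dC uC = (3 / π * alphaO bC dC uC) * epsO bT dT uT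
      - betaO bT dT uT := rfl
  have ht0 : 0 ≤ 3 / π * alphaO bC dC uC := by positivity
  have ht1 : 3 / π * alphaO bC dC uC ≤ 1 := by
    rw [div_mul_eq_mul_div, div_le_one hpi]; linarith
  generalize 3 / π * alphaO bC dC uC = t at *
  have hε0 : 0 ≤ epsO bT dT uT := by linarith
  have hε1 : epsO bT dT uT ≤ π := by linarith
  have htε0 := mul_nonneg ht0 hε0
  have htε1 := mul_nonneg (sub_nonneg.2 ht1) hε0
  -- key bounds
  have hk1 : 0 ≤ R * sin (alphaProj bT dT uT bC dC uC + betaO bT dT uT) :=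
    mul_nonneg hR (sin_nonneg_of_nonneg_of_le_pi (by linarith) (by linarith))
  have hk2 : 0 ≤ S * sin (2 * π / 3 - alphaProj bT dT uT bC dC uC - deltaO bT dT uT) :=
    mul_nonneg hS (sin_nonneg_of_nonneg_of_le_pi (by linarith) (by linarith))
  have hA0 : -(π / 3) ≤ alphaProj bT dT uT bC dC uC := by linarith
  have hA1 : alphaProj bT dT uT bC dC uC ≤ 2 * π / 3 - deltaO bT dT uT := by linarith
  have hc3 : cos (2 * π / 3) = -(1/2) := by
    rw [show 2 * π / 3 = π - π / 3 by ring, cos_pi_sub, cos_pi_div_three]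
  have hs3 : sin (2 * π / 3) = √3 / 2 := by
    rw [show 2 * π / 3 = π - π / 3 by ring, sin_pi_sub, sin_pi_div_three]
  rw [sin_add] at hk1
  rw [sin_sub, sin_sub, cos_sub, hc3, hs3] at hk2
  have hM : 0 ≤ uT + sin (alphaProj bT dT uT bC dC uC) * Lmax bT dT uT bC dC uC ∧
      0 ≤ dT + (√3 / 2 * cos (alphaProj bT dT uT bC dC uC)
        - sin (alphaProj bT dT uT bC dC uC) / 2) * Lmax bT dT uT bC dC uC ∧
      0 ≤ bT - (√3 / 2 * cos (alphaProj bT dT uT bC dC uC)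
        + sin (alphaProj bT dT uT bC dC uC) / 2) * Lmax bT dT uT bC dC uC := by
    by_cases e1 : alphaProj bT dT uT bC dC uC = -(π / 3)
    · have e0 : alphaProj bT dT uT bC dC uC ≠ π / 2 := by rw [e1]; intro h; linarith
      simp only [Lmax, if_neg e0, if_pos e1]
      rw [e1, sin_neg, cos_neg, cos_pi_div_three, sin_pi_div_three]
      have : √3 / 2 * (2 / √3 * uT) = uT := by field_simp
      exact ⟨by linarith, by linarith, by linarith⟩
    by_cases e2 : alphaProj bT dT uT bC dC uC = 2 * π / 3
    · have e0 : alphaProj bT dT uT bC dC uC ≠ π / 2 := by rw [e2]; intro h; linarith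
      simp only [Lmax, if_neg e0, if_neg e1, if_pos e2]
      have hδ : deltaO bT dT uT = 0 := by linarith
      have hb0 : bT = 0 := by rw [hSs, hδ]; simp
      rw [e2, hc3, hs3]
      have : √3 / 2 * (2 / √3 * (1 - uT)) = 1 - uT := by field_simp
      exact ⟨by linarith, by linarith, by linarith⟩
    have hθ : 0 < sin (alphaProj bT dT uT bC dC uC + π / 3) := by
      apply sin_pos_of_pos_of_lt_pi
      · have := lt_of_le_of_ne hA0 (Ne.symm e1); linarith
      · have := lt_of_le_of_ne (hA1.trans (by linarith)) e2; linarith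
    rw [sin_add, cos_pi_div_three, sin_pi_div_three] at hθ
    have hL : Lmax bT dT uT bC dC uC * (sin (alphaProj bT dT uT bC dC uC) * (1 / 2) +
        cos (alphaProj bT dT uT bC dC uC) * (√3 / 2)) = bT := by
      by_cases e0 : alphaProj bT dT uT bC dC uC = π / 2
      · simp only [Lmax, if_pos e0]
        rw [e0]; simp; ring
      · simp only [Lmax, if_neg e0, if_neg e1, if_neg e2]
        have hcne : cos (alphaProj bT dT uT bC dC uC) ≠ 0 := by
          intro hc
          rcases lt_or_gt_of_ne e0 with h | h
          · exact (cos_pos_of_mem_Ioo ⟨by linarith, h⟩).ne' hc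
          · exact (cos_neg_of_pi_div_two_lt_of_lt h (by linarith)).ne hc
        generalize alphaProj bT dT uT bC dC uC = a at *
        have h1 : √(tan a ^ 2 + 1) = |cos a|⁻¹ := by
          have : tan a ^ 2 + 1 = (cos a)⁻¹ ^ 2 := by
            rw [tan_eq_sin_div_cos]
            field_simp
            exact sin_sq_add_cos_sq a
          rw [this, sqrt_sq_eq_abs, abs_inv]
        have h2 : tan a + √3 = (sin a + √3 * cos a) / cos a := by
          rw [tan_eq_sin_div_cos]; field_simp
        have hp : 0 < sin a + √3 * cos a := by linarith
        rw [h1, h2, abs_div, abs_of_pos hp]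
        have : 0 < |cos a| := abs_pos.2 hcne
        field_simp
    generalize Lmax bT dT uT bC dC uC = L at *
    generalize alphaProj bT dT uT bC dC uC = a at *
    refine ⟨?_, ?_, by linarith⟩
    · refine nonneg_of_mul_nonneg_left ?_ hθ
      have : (uT + sin a * L) * (sin a * (1 / 2) + cos a * (√3 / 2))
        = uT * (sin a * (1 / 2) + cos a * (√3 / 2)) + sin a * bT := by rw [← hL]; ring
      rw [this]
      have : R * (sin a * cos (betaO bT dT uT) + cos a * sin (betaO bT dT uT))
        = sin a * (uT + 2 * bT) + cos a * (√3 * uT) := by rw [hRc, hRs]; ring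
      linarith
    · refine nonneg_of_mul_nonneg_left ?_ hθ
      have : (dT + (√3 / 2 * cos a - sin a / 2) * L) * (sin a * (1 / 2) + cos a * (√3 / 2))
        = dT * (sin a * (1 / 2) + cos a * (√3 / 2)) + (√3 / 2 * cos a - sin a / 2) * bT := by
          rw [← hL]; ring
      rw [this]
      have h5 := mul_nonneg h30.le hk2
      have h6 : ∀ x y : ℝ, √3 * (S * ((√3 / 2 * cos a - -(1 / 2) * sin a) * x
          - (-(1 / 2) * cos a + √3 / 2 * sin a) * y))
        = (√3 / 2 * cos a + 1/2 * sin a) * (√3 * (S * x)) + (√3 * (1/2) * cos a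
          - (√3 * √3) / 2 * sin a) * (S * y) := by intro x y; ring
      rw [h6, ← hSc, ← hSs, h3] at h5
      linarith
  have hW : ∀ p q L r : ℝ, 0 ≤ p → 0 ≤ r → r ≤ 1 → 0 ≤ p + q * L → 0 ≤ p + q * (r * L) := by
    intro p q L r h1 h2 h3 h4
    have := mul_nonneg h2 h4
    have := mul_nonneg (sub_nonneg.2 h3) h1
    linarith
  obtain ⟨m1, m2, m3⟩ := hM
  have w1 := hW _ _ _ _ hu hr0 hr1 m1
  have w2 := hW _ _ _ _ hd hr0 hr1 m2
  rw [sub_eq_add_neg, ← neg_mul] at m3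
  have w3 := hW _ _ _ _ hb hr0 hr1 m3
  refine ⟨?_, ?_, ?_, ?_⟩
  · simp only [bW, dW, uW, lenTC, cos_pi_div_three, sin_pi_div_three]
    linarith
  · simp only [dW, uW, lenTC, cos_pi_div_three, sin_pi_div_three]
    linarith
  · simp only [uW, lenTC]
    linarith
  · simp only [bW]; ring
end

section
/- For every Subjective Logic opinion T = (b_T,d_T,u_T), if C = (0,1,0) (pure disbelief), then the combination W = T⊛C equals (0,1,0), i.e. b_W = 0, d_W = 1 and u_W = 0. -/
lemma rO_disbelief : rO 0 1 0 = 1 := by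
  have h3 : (0:ℝ) < Real.sqrt 3 := by positivity
  have hx : xM 0 1 0 = 2 / Real.sqrt 3 := by simp [xM, alphaO, yO]
  have hy : yM 0 1 0 = 0 := by
    unfold yM
    rw [hx]
    field_simp
    ring
  unfold rO
  rw [hx, hy]
  have : xO 1 0 = 2 / Real.sqrt 3 := by simp [xO]
  rw [this]
  simp only [yO]
  apply div_self
  positivity

lemma alphaProj_disbelief (b d u : ℝ) : alphaProj b d u 0 1 0 = - betaO b d u := by
  simp [alphaProj, alphaO]

lemma key (b d u : ℝ) (hT : IsOpinion b d u) :
    Real.sin (alphaProj b d u 0 1 0) * Lmax b d u 0 1 0 = -u ∧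
    Real.cos (alphaProj b d u 0 1 0) * Lmax b d u 0 1 0 = (2 * b + u) / Real.sqrt 3 := by
  obtain ⟨hb, hd, hu, hs⟩ := hT
  have h3 : (0:ℝ) < Real.sqrt 3 := by positivity
  have h33 : Real.sqrt 3 ^ 2 = 3 := Real.sq_sqrt (by norm_num)
  have hpi := Real.pi_pos
  unfold Lmax
  rw [alphaProj_disbelief]
  by_cases hβ : betaO b d u = Real.pi / 3
  · have hb0 : b = 0 := by
      by_cases h1 : d = 1
      · linarith
      · have hpos : 0 < 2 * b + u := by
          rcases lt_or_eq_of_le hu with h | h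
          · linarith
          · rcases lt_or_eq_of_le hb with h' | h'
            · linarith
            · exact absurd (by linarith) h1
        rw [betaO, if_neg h1, show 2 - 2 * d - u = 2 * b + u by linarith] at hβ
        have ht := congrArg Real.tan hβ
        rw [Real.tan_arctan, Real.tan_pi_div_three, div_eq_iff hpos.ne'] at ht
        have := mul_left_cancel₀ h3.ne' ht
        linarith
    rw [hβ, if_neg (by intro h; linarith), if_pos rfl, Real.sin_neg, Real.cos_neg,
      Real.sin_pi_div_three, Real.cos_pi_div_three, hb0]
    constructor
    · field_simp
    · field_simp
      ring
  · have h1 : d ≠ 1 := fun h => hβ (by simp [betaO, h])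
    have hpos : 0 < 2 * b + u := by
      rcases lt_or_eq_of_le hu with h | h
      · linarith
      · rcases lt_or_eq_of_le hb with h' | h'
        · linarith
        · exact absurd (by linarith) h1
    have hβe : betaO b d u = Real.arctan (Real.sqrt 3 * u / (2 * b + u)) := by
      rw [betaO, if_neg h1, show 2 - 2 * d - u = 2 * b + u by linarith]
    have hbpos : 0 < b := by
      rcases lt_or_eq_of_le hb with h' | h'
      · exact h'
      · exfalso
        apply hβ
        rw [hβe, ← h', mul_zero, zero_add, mul_div_assoc, div_self (by linarith), mul_one,
          ← Real.tan_pi_div_three, Real.arctan_tan] <;> linarith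
    have hlt := Real.arctan_lt_pi_div_two (Real.sqrt 3 * u / (2 * b + u))
    have hgt := Real.neg_pi_div_two_lt_arctan (Real.sqrt 3 * u / (2 * b + u))
    rw [← hβe] at hlt hgt
    rw [if_neg (by intro h; linarith), if_neg (by intro h; apply hβ; linarith),
      if_neg (by intro h; linarith), hβe]
    rw [Real.sin_neg, Real.cos_neg, Real.tan_neg, Real.tan_arctan, Real.sin_arctan,
      Real.cos_arctan]
    have habs : |-(Real.sqrt 3 * u / (2 * b + u)) + Real.sqrt 3|
        = Real.sqrt 3 * (2 * b) / (2 * b + u) := by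
      rw [show -(Real.sqrt 3 * u / (2 * b + u)) + Real.sqrt 3
        = Real.sqrt 3 * (2 * b) / (2 * b + u) by field_simp; ring]
      exact abs_of_pos (by positivity)
    rw [habs, neg_sq, add_comm (_ ^ 2) (1:ℝ)]
    have hS : 0 < Real.sqrt (1 + (Real.sqrt 3 * u / (2 * b + u)) ^ 2) := by positivity
    generalize Real.sqrt (1 + (Real.sqrt 3 * u / (2 * b + u)) ^ 2) = S at hS
    constructor
    · field_simp
    · field_simp

/-- If C = (0,1,0) (pure disbelief), then the combination W = T⊛C equals (0,1,0). -/
theorem stmt15 (bT dT uT : ℝ) (hT : IsOpinion bT dT uT) :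
    bW bT dT uT 0 1 0 = 0 ∧ dW bT dT uT 0 1 0 = 1 ∧ uW bT dT uT 0 1 0 = 0 := by
  obtain ⟨hs, hc⟩ := key bT dT uT hT
  obtain ⟨-, -, -, hsum⟩ := hT
  have h3 : (0:ℝ) < Real.sqrt 3 := by positivity
  have hu : uW bT dT uT 0 1 0 = 0 := by
    rw [uW, lenTC, rO_disbelief, one_mul, hs]
    ring
  have hd : dW bT dT uT 0 1 0 = 1 := by
    rw [dW, hu, lenTC, rO_disbelief, one_mul, mul_right_comm, hc, Real.cos_pi_div_three,
      Real.sin_pi_div_three]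
    field_simp
    linarith
  refine ⟨?_, hd, hu⟩
  rw [bW, hd, hu]
  ring
end

section
/- For every Subjective Logic opinion T = (b_T,d_T,u_T), if C = (0,0,1) (complete uncertainty), then the combination W = T⊛C equals (0,0,1), i.e. b_W = 0, d_W = 0 and u_W = 1. -/
theorem alphaC_eq : alphaO 0 0 1 = Real.pi / 3 := by
  unfold alphaO
  rw [if_neg (by norm_num)]
  rw [show Real.sqrt 3 * 1 / (2 * 0 + 1) = Real.tan (Real.pi / 3) by
    rw [Real.tan_pi_div_three]; norm_num]
  apply Real.arctan_tan <;> linarith [Real.pi_pos]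

theorem rC_eq : rO 0 0 1 = 1 := by
  have h3 : Real.sqrt 3 ≠ 0 := by positivity
  have hx : xM 0 0 1 = xO 0 1 := by
    unfold xM xO yO
    rw [alphaC_eq, Real.tan_pi_div_three]
    field_simp
    norm_num
  have hy : yM 0 0 1 = yO 1 := by
    unfold yM
    rw [hx]
    unfold xO yO
    field_simp
    norm_num
  unfold rO
  rw [hx, hy]
  apply div_self
  unfold yO
  positivity

theorem alphaProj_C (b d u : ℝ) :
    alphaProj b d u 0 0 1 = 2 * Real.pi / 3 - deltaO b d u := by
  unfold alphaProj epsO gammaO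
  rw [alphaC_eq]
  have := Real.pi_ne_zero
  field_simp
  ring

theorem sin_two_pi_third : Real.sin (2 * Real.pi / 3) = Real.sqrt 3 / 2 := by
  rw [show 2 * Real.pi / 3 = Real.pi - Real.pi / 3 by ring, Real.sin_pi_sub,
    Real.sin_pi_div_three]

theorem cos_two_pi_third : Real.cos (2 * Real.pi / 3) = -(1 / 2) := by
  rw [show 2 * Real.pi / 3 = Real.pi - Real.pi / 3 by ring, Real.cos_pi_sub,
    Real.cos_pi_div_three]

/-- The sine and cosine of the projected direction, away from the vertex U. -/
theorem proj_facts (b d u : ℝ) (hT : IsOpinion b d u) (hu : u ≠ 1) :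
    0 < distOU b d u ∧
    distOU b d u ^ 2 = (4 / 3) * (b ^ 2 + b * d + d ^ 2) ∧
    Real.sin (alphaProj b d u 0 0 1) * distOU b d u = b + d ∧
    Real.cos (alphaProj b d u 0 0 1) * distOU b d u * Real.sqrt 3 = b - d := by
  obtain ⟨hb, hd, hu0, hsum⟩ := hT
  have hbd : 0 < b + d := by
    rcases (add_nonneg hb hd).lt_or_eq with h | h
    · exact h
    · exact absurd (by linarith) hu
  have hin : (1/3) * (1 + d - u)^2 + b^2 = (4 / 3) * (b ^ 2 + b * d + d ^ 2) := by
    rw [show u = 1 - b - d by linarith]; ring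
  have hpos : 0 < (4 / 3) * (b ^ 2 + b * d + d ^ 2) := by
    nlinarith [mul_nonneg hb hd, mul_pos hbd hbd, sq_nonneg (b - d)]
  have hR2 : distOU b d u ^ 2 = (4 / 3) * (b ^ 2 + b * d + d ^ 2) := by
    unfold distOU
    rw [hin, Real.sq_sqrt hpos.le]
  have hR : 0 < distOU b d u := by
    unfold distOU
    rw [hin]
    exact Real.sqrt_pos.mpr hpos
  have h3 : Real.sqrt 3 ^ 2 = 3 := Real.sq_sqrt (by norm_num)
  have h3p : 0 < Real.sqrt 3 := by positivity
  have hdel : deltaO b d u = Real.arcsin (b / distOU b d u) := by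
    unfold deltaO; rw [if_neg hu]
  rw [alphaProj_C, Real.sin_sub, Real.cos_sub, sin_two_pi_third, cos_two_pi_third, hdel]
  set R := distOU b d u with hRdef
  have hbR : b / R ≤ 1 := by
    rw [div_le_one hR]
    nlinarith [mul_nonneg hb hd, sq_nonneg d, sq_nonneg b]
  have hbR0 : 0 ≤ b / R := by positivity
  have hsin : Real.sin (Real.arcsin (b / R)) = b / R :=
    Real.sin_arcsin (by linarith) hbR
  have hcos : Real.cos (Real.arcsin (b / R)) = (b + 2 * d) / (Real.sqrt 3 * R) := by
    rw [Real.cos_arcsin]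
    have hnn : 0 ≤ (b + 2 * d) / (Real.sqrt 3 * R) := by positivity
    rw [← Real.sqrt_sq hnn]
    congr 1
    rw [div_pow, div_pow, mul_pow, h3]
    have hRne : R ^ 2 ≠ 0 := by positivity
    rw [eq_div_iff (by positivity), sub_mul, div_mul_eq_mul_div,
      show b ^ 2 * (3 * R ^ 2) = 3 * b ^ 2 * R ^ 2 by ring, mul_div_assoc, div_self hRne, hR2]
    ring
  rw [hsin, hcos]
  refine ⟨hR, hR2, ?_, ?_⟩
  · field_simp
    ring
  · field_simp
    rw [h3]
    ring

theorem Lmax_C (b d u : ℝ) (hT : IsOpinion b d u) (hu : u ≠ 1) :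
    Lmax b d u 0 0 1 = distOU b d u := by
  obtain ⟨hR, hR2, hs, hc⟩ := proj_facts b d u hT hu
  obtain ⟨hb, hd, hu0, hsum⟩ := hT
  have h3 : Real.sqrt 3 ^ 2 = 3 := Real.sq_sqrt (by norm_num)
  have h3p : 0 < Real.sqrt 3 := by positivity
  unfold Lmax
  set a := alphaProj b d u 0 0 1 with ha
  set R := distOU b d u with hRdef
  split_ifs with h1 h2 h4
  · rw [h1, Real.cos_pi_div_two] at hc
    rw [h1, Real.sin_pi_div_two] at hs
    linarith
  · exfalso
    rw [h2, Real.sin_neg, Real.sin_pi_div_three] at hs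
    nlinarith [mul_pos h3p hR]
  · rw [h4, sin_two_pi_third] at hs
    rw [h4, cos_two_pi_third] at hc
    have hb0 : b = 0 := by linarith
    have h5 : 1 - u = d := by linarith
    rw [h5]
    rw [hb0] at hs
    field_simp
    linarith
  · have hcne : Real.cos a ≠ 0 := by
      intro h
      have hlt : -(Real.pi / 2) ≤ deltaO b d u ∧ deltaO b d u ≤ Real.pi / 2 := by
        unfold deltaO
        rw [if_neg hu]
        exact ⟨Real.neg_pi_div_two_le_arcsin _, Real.arcsin_le_pi_div_two _⟩
      have haeq := alphaProj_C b d u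
      rw [← ha] at haeq
      have hpi := Real.pi_pos
      rw [← Real.cos_pi_div_two] at h
      by_cases hap : a ≤ Real.pi
      · exact h1 (Real.injOn_cos ⟨by linarith, hap⟩ ⟨by linarith, by linarith⟩ h)
      · push Not at hap
        have : Real.sin a < 0 := by
          rw [← Real.sin_sub_two_pi]
          exact Real.sin_neg_of_neg_of_neg_pi_lt (by linarith) (by linarith)
        nlinarith
    have hsum2 : (Real.sin a + Real.sqrt 3 * Real.cos a) * R = 2 * b := by
      linarith
    have hbne : b ≠ 0 := by
      intro h0
      apply h4
      rw [ha, alphaProj_C]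
      unfold deltaO
      rw [if_neg hu, h0]
      simp
    have hbp : 0 < b := lt_of_le_of_ne hb (Ne.symm hbne)
    have hval : Real.sin a + Real.sqrt 3 * Real.cos a = 2 * b / R := by
      rw [eq_div_iff hR.ne']; exact hsum2
    have hsq : Real.sqrt (Real.tan a ^ 2 + 1) = 1 / |Real.cos a| := by
      rw [show Real.tan a ^ 2 + 1 = (1 / |Real.cos a|) ^ 2 by
        rw [div_pow, sq_abs, Real.tan_eq_sin_div_cos]
        field_simp
        exact Real.sin_sq_add_cos_sq a]
      exact Real.sqrt_sq (by positivity)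
    have habs : |Real.tan a + Real.sqrt 3| = (2 * b / R) / |Real.cos a| := by
      rw [show Real.tan a + Real.sqrt 3 = (2 * b / R) / Real.cos a by
        rw [← hval, Real.tan_eq_sin_div_cos]
        field_simp]
      rw [abs_div, abs_of_pos (show 0 < 2 * b / R by positivity)]
    rw [hsq, habs]
    have := abs_pos.mpr hcne
    field_simp

/-- If C = (0,0,1) (complete uncertainty), then the combination W = T⊛C equals (0,0,1). -/
theorem stmt16 (bT dT uT : ℝ) (hT : IsOpinion bT dT uT) :
    bW bT dT uT 0 0 1 = 0 ∧ dW bT dT uT 0 0 1 = 0 ∧ uW bT dT uT 0 0 1 = 1 := by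
  suffices h : uW bT dT uT 0 0 1 = 1 ∧ dW bT dT uT 0 0 1 = 0 by
    refine ⟨?_, h.2, h.1⟩
    unfold bW
    rw [h.1, h.2]
    norm_num
  by_cases hu : uT = 1
  · obtain ⟨hb, hd, hu0, hsum⟩ := hT
    have hb0 : bT = 0 := by linarith
    have hd0 : dT = 0 := by linarith
    have hl : lenTC bT dT uT 0 0 1 = 0 := by
      have hL : Lmax bT dT uT 0 0 1 = 0 := by
        have ha : alphaProj bT dT uT 0 0 1 = 2 * Real.pi / 3 := by
          rw [alphaProj_C]
          unfold deltaO
          rw [if_pos hu, sub_zero]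
        have hpi := Real.pi_pos
        unfold Lmax
        rw [ha, if_neg (by intro h; linarith), if_neg (by intro h; linarith), if_pos rfl, hu]
        ring
      unfold lenTC
      rw [hL, mul_zero]
    have h1 : uW bT dT uT 0 0 1 = 1 := by
      unfold uW
      rw [hl, hu]
      ring
    refine ⟨h1, ?_⟩
    unfold dW
    rw [h1, hl, hu, hd0]
    ring
  · have hl : lenTC bT dT uT 0 0 1 = distOU bT dT uT := by
      unfold lenTC
      rw [rC_eq, Lmax_C bT dT uT hT hu, one_mul]
    obtain ⟨hR, hR2, hs, hc⟩ := proj_facts bT dT uT hT hu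
    obtain ⟨hb, hd, hu0, hsum⟩ := hT
    have h1 : uW bT dT uT 0 0 1 = 1 := by
      unfold uW
      rw [hl, hs]
      linarith
    refine ⟨h1, ?_⟩
    unfold dW
    rw [h1, hl, Real.cos_pi_div_three, Real.sin_pi_div_three]
    linarith
end

section
/- For all Subjective Logic opinions T = (b_T,d_T,u_T) and C = (b_C,d_C,u_C), the combination W = T⊛C = (b_W,d_W,u_W) satisfies b_W ≤ b_T; equivalently, d_T + u_T ≤ d_W + u_W. -/
theorem arctan_ratio_bounds (u x : ℝ) (hu : 0 ≤ u) (hx : u ≤ x) :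
    0 ≤ Real.arctan (Real.sqrt 3 * u / x) ∧ Real.arctan (Real.sqrt 3 * u / x) ≤ Real.pi / 3 := by
  have hx0 : 0 ≤ x := hu.trans hx
  constructor
  · exact Real.arctan_nonneg.mpr (by positivity)
  · rw [← Real.arctan_sqrt_three]
    apply Real.arctan_strictMono.monotone
    rw [mul_div_assoc]
    exact mul_le_of_le_one_right (Real.sqrt_nonneg 3) (div_le_one_of_le₀ hx hx0)

theorem alphaO_bounds (b d u : ℝ) (h : IsOpinion b d u) :
    0 ≤ alphaO b d u ∧ alphaO b d u ≤ Real.pi / 3 := by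
  obtain ⟨hb, hd, hu, hs⟩ := h
  have := Real.pi_pos
  unfold alphaO
  split_ifs
  · constructor <;> linarith
  · exact arctan_ratio_bounds _ _ hu (by linarith)

theorem betaO_bounds (b d u : ℝ) (h : IsOpinion b d u) :
    0 ≤ betaO b d u ∧ betaO b d u ≤ Real.pi / 3 := by
  obtain ⟨hb, hd, hu, hs⟩ := h
  have := Real.pi_pos
  unfold betaO
  split_ifs
  · constructor <;> linarith
  · exact arctan_ratio_bounds _ _ hu (by linarith)

theorem deltaO_bounds (b d u : ℝ) (h : IsOpinion b d u) :
    0 ≤ deltaO b d u ∧ deltaO b d u ≤ Real.pi / 2 := by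
  obtain ⟨hb, hd, hu, hs⟩ := h
  have := Real.pi_pos
  unfold deltaO
  split_ifs
  · constructor <;> linarith
  · exact ⟨Real.arcsin_nonneg.mpr (div_nonneg hb (Real.sqrt_nonneg _)), Real.arcsin_le_pi_div_two _⟩

theorem lenTC_nonneg (bT dT uT bC dC uC : ℝ) (hT : IsOpinion bT dT uT) :
    0 ≤ lenTC bT dT uT bC dC uC := by
  obtain ⟨hb, hd, hu, hs⟩ := hT
  have h1 : 0 ≤ 1 - uT := by linarith
  unfold lenTC rO Lmax
  apply mul_nonneg (by positivity)
  split_ifs <;> positivity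

theorem sin_proj_nonneg (bT dT uT bC dC uC : ℝ)
    (hT : IsOpinion bT dT uT) (hC : IsOpinion bC dC uC) :
    0 ≤ Real.sin (alphaProj bT dT uT bC dC uC + Real.pi / 3) := by
  obtain ⟨ha0, ha1⟩ := alphaO_bounds _ _ _ hC
  obtain ⟨hb0, hb1⟩ := betaO_bounds _ _ _ hT
  obtain ⟨hd0, hd1⟩ := deltaO_bounds _ _ _ hT
  have hpi := Real.pi_pos
  have he : epsO bT dT uT = 2 * Real.pi / 3 + betaO bT dT uT - deltaO bT dT uT := by
    unfold epsO gammaO; ring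
  have he0 : 0 ≤ epsO bT dT uT := by linarith
  have hk0 : 0 ≤ 3 / Real.pi * alphaO bC dC uC := by positivity
  have hk1 : 3 / Real.pi * alphaO bC dC uC ≤ 1 := by
    rw [div_mul_eq_mul_div, div_le_one hpi]; linarith
  have h1 := mul_nonneg hk0 he0
  have h2 := mul_le_of_le_one_left he0 hk1
  unfold alphaProj
  apply Real.sin_nonneg_of_nonneg_of_le_pi <;> linarith

theorem stmt17 (bT dT uT bC dC uC : ℝ)
    (hT : IsOpinion bT dT uT) (hC : IsOpinion bC dC uC) :
    bW bT dT uT bC dC uC ≤ bT ∧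
    dT + uT ≤ dW bT dT uT bC dC uC + uW bT dT uT bC dC uC := by
  have h := mul_nonneg (sin_proj_nonneg bT dT uT bC dC uC hT hC)
    (lenTC_nonneg bT dT uT bC dC uC hT)
  have key : dW bT dT uT bC dC uC + uW bT dT uT bC dC uC = dT + uT +
      Real.sin (alphaProj bT dT uT bC dC uC + Real.pi / 3) * lenTC bT dT uT bC dC uC := by
    unfold dW uW
    rw [Real.sin_add, Real.cos_pi_div_three]
    ring
  have hs := hT.2.2.2
  refine ⟨?_, by linarith⟩
  unfold bW
  linarith
end
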